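/- There is a constant c such that the following holds for every directed acyclic graph G as above and every m≥N. Let C be the clause ¬p_{i_1,j_1}∨…∨¬p_{i_k,j_k} with k≥1, 1=i_1<…<i_k≤n, each j_ℓ∈{1,…,m}, such that every vertex of dom(C) supports vertex 1. Let P be a set of vertices with dom(C)⊆P, and let L be a set of vertices with L∩P=∅ such that for every non-bypassed i_ℓ∈dom(C), each predecessor of i_ℓ in G lies in dom(C)∪L. Let Γ = Stone(G,m) ∪ {¬p_{i,j}∨r_j : i∈L, 1≤j≤m}. Then there is a regRTI derivation of C from Γ of size at most c·N·m², in which every variable used as a resolution variable is either some variable r_j or some variable p_{i,j} with i∉P. -/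

import Mathlib

open scoped Classical

/-! ### Clauses and literals -/

abbrev Lit (V : Type) := V × Bool
abbrev Clause (V : Type) := Finset (V × Bool)

/-- Propositional variables for the Stone principle: `p i j` and `r j`. -/
inductive SV where
  | p (i j : ℕ) : SV
  | r (j : ℕ) : SV
deriving DecidableEq

/-- A dag on vertices `1,…,N` with unique sink `1`, in which every non-source vertex
(the vertices `1,…,n`) has exactly the two predecessors `p1 i` and `p2 i`,
every edge `(i′,i)` satisfies `i′ > i`, and the sources are exactly `n+1,…,N`. -/
structure StoneDag where
  N : ℕ
  n : ℕ
  p1 : ℕ → ℕ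
  p2 : ℕ → ℕ
  n_lt_N : n < N
  p1_gt : ∀ i, 1 ≤ i → i ≤ n → i < p1 i
  p2_gt : ∀ i, 1 ≤ i → i ≤ n → i < p2 i
  p1_le : ∀ i, 1 ≤ i → i ≤ n → p1 i ≤ N
  p2_le : ∀ i, 1 ≤ i → i ≤ n → p2 i ≤ N
  p_ne : ∀ i, 1 ≤ i → i ≤ n → p1 i ≠ p2 i
  unique_sink : ∀ i, 2 ≤ i → i ≤ N → ∃ v, 1 ≤ v ∧ v ≤ n ∧ (p1 v = i ∨ p2 v = i)

/-- The clause set `Stone(G,m)`. -/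
def stoneClauses (G : StoneDag) (m : ℕ) : Set (Clause SV) :=
  { C | ∃ i, 1 ≤ i ∧ i ≤ G.N ∧
      C = (Finset.Icc 1 m).image (fun j => ((SV.p i j, true) : Lit SV)) } ∪
  { C | ∃ i j, G.n < i ∧ i ≤ G.N ∧ 1 ≤ j ∧ j ≤ m ∧
      C = {(SV.p i j, false), (SV.r j, true)} } ∪
  { C | ∃ j, 1 ≤ j ∧ j ≤ m ∧ C = {(SV.p 1 j, false), (SV.r j, false)} } ∪
  { C | ∃ i j j' j'', 1 ≤ i ∧ i ≤ G.n ∧ 1 ≤ j ∧ j ≤ m ∧ 1 ≤ j' ∧ j' ≤ m ∧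
      1 ≤ j'' ∧ j'' ≤ m ∧ j ≠ j' ∧ j ≠ j'' ∧
      C = {(SV.p (G.p1 i) j', false), (SV.r j', false),
           (SV.p (G.p2 i) j'', false), (SV.r j'', false),
           (SV.p i j, false), (SV.r j, true)} }

/-! ### Resolution inference rules -/

/-- `(A ∖ {x}) ∪ (B ∖ {¬x})`. -/
def wres {V : Type} [DecidableEq V] (x : V) (A B : Clause V) : Clause V :=
  A.erase (x, true) ∪ B.erase (x, false)

/-- w-resolution inference. -/
def wstep {V : Type} [DecidableEq V] (x : V) (A B C : Clause V) : Prop :=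
  C = wres x A B

/-- ordinary resolution inference. -/
def rstep {V : Type} [DecidableEq V] (x : V) (A B C : Clause V) : Prop :=
  (x, true) ∈ A ∧ (x, false) ∈ B ∧ C = wres x A B

/-- degenerate resolution inference. -/
def dstep {V : Type} [DecidableEq V] (x : V) (A B C : Clause V) : Prop :=
  ((x, true) ∈ A ∧ (x, false) ∈ B ∧ C = wres x A B) ∨
  ((x, true) ∈ A ∧ (x, false) ∉ B ∧ C = B) ∨
  ((x, true) ∉ A ∧ (x, false) ∈ B ∧ C = A) ∨
  ((x, true) ∉ A ∧ (x, false) ∉ B ∧ (C = A ∨ C = B))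

/-! ### Tree-like proofs -/

/-- Binary proof trees: each node is labeled with a clause, internal nodes also
with a resolution variable. -/
inductive PTree (V : Type) [DecidableEq V] where
  | leaf : Clause V → PTree V
  | node : Clause V → V → PTree V → PTree V → PTree V

namespace PTree

variable {V : Type} [DecidableEq V]

/-- The clause labeling the root. -/
def clause : PTree V → Clause V
  | leaf c => c
  | node c _ _ _ => c

/-- Number of nodes. -/
def size : PTree V → ℕ
  | leaf _ => 1
  | node _ _ t1 t2 => t1.size + t2.size + 1

/-- The set of variables used as resolution variables. -/
def resVars : PTree V → Finset V
  | leaf _ => ∅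
  | node _ x t1 t2 => insert x (t1.resVars ∪ t2.resVars)

/-- No variable is used as a resolution variable more than once on any
root-to-leaf path. -/
def regular : PTree V → Prop
  | leaf _ => True
  | node _ x t1 t2 => x ∉ t1.resVars ∧ x ∉ t2.resVars ∧ t1.regular ∧ t2.regular

/-- Every internal node is obtained from its children by the inference `step`. -/
def wf (step : V → Clause V → Clause V → Clause V → Prop) : PTree V → Prop
  | leaf _ => True
  | node c x t1 t2 => step x t1.clause t2.clause c ∧ t1.wf step ∧ t2.wf step

/-- All clauses occurring in the tree. -/
def clauses : PTree V → Set (Clause V)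
  | leaf c => {c}
  | node c _ t1 t2 => t1.clauses ∪ t2.clauses ∪ {c}

/-- Every leaf is labeled by a clause of `Γ` or by a clause occurring strictly
earlier in postorder; `S` is the set of clauses occurring before this subtree. -/
def lemmasOK (Γ : Set (Clause V)) : PTree V → Set (Clause V) → Prop
  | leaf c, S => c ∈ Γ ∨ c ∈ S
  | node _ _ t1 t2, S => t1.lemmasOK Γ S ∧ t2.lemmasOK Γ (S ∪ t1.clauses)

/-- Every leaf is labeled by a clause of `Γ`. -/
def leavesIn (Γ : Set (Clause V)) : PTree V → Prop
  | leaf c => c ∈ Γ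
  | node _ _ t1 t2 => t1.leavesIn Γ ∧ t2.leavesIn Γ

/-- Postorder scan computing, from the set `L` of clauses learned so far
(initially `Γ`), the pair of (i) the set of clauses learned after traversing the
subtree — a clause becomes learned when it is the final clause of an input
subderivation, i.e. a subderivation each of whose inferences has at least one
hypothesis that is already learned — and (ii) whether this subtree is an input
subderivation. -/
def scan : PTree V → Set (Clause V) → Set (Clause V) × Prop
  | leaf _, L => (L, True)
  | node c _ t1 t2, L =>
      let r1 := t1.scan L
      let r2 := t2.scan r1.1
      let inp : Prop := r1.2 ∧ r2.2 ∧ (t1.clause ∈ r1.1 ∨ t2.clause ∈ r2.1)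
      ({ d | d ∈ r2.1 ∨ (inp ∧ d = c) }, inp)

/-- Every leaf is labeled by a learned clause (a clause of the initial set `L`,
or one derived by an input subderivation strictly earlier in postorder). -/
def lemOK : PTree V → Set (Clause V) → Prop
  | leaf c, L => c ∈ L
  | node _ _ t1 t2, L => t1.lemOK L ∧ t2.lemOK (t1.scan L).1

end PTree

/-- regWRTL refutation of `Γ`. -/
def RegWRTLRefutation {V : Type} [DecidableEq V] (Γ : Set (Clause V)) (T : PTree V) : Prop :=
  T.clause = ∅ ∧ T.wf wstep ∧ T.regular ∧ T.lemmasOK Γ ∅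

/-- pool resolution refutation of `Γ`. -/
def PoolRefutation {V : Type} [DecidableEq V] (Γ : Set (Clause V)) (T : PTree V) : Prop :=
  T.clause = ∅ ∧ T.wf dstep ∧ T.regular ∧ T.lemmasOK Γ ∅

/-- regRTL refutation of `Γ`. -/
def RegRTLRefutation {V : Type} [DecidableEq V] (Γ : Set (Clause V)) (T : PTree V) : Prop :=
  T.clause = ∅ ∧ T.wf rstep ∧ T.regular ∧ T.lemmasOK Γ ∅

/-- regRTI refutation of `Γ`: all lemmas are input lemmas. -/
def RegRTIRefutation {V : Type} [DecidableEq V] (Γ : Set (Clause V)) (T : PTree V) : Prop :=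
  T.clause = ∅ ∧ T.wf rstep ∧ T.regular ∧ T.lemOK Γ

/-- regRTI derivation of the clause `D` from `Γ`. -/
def RegRTIDeriv {V : Type} [DecidableEq V] (Γ : Set (Clause V)) (D : Clause V)
    (T : PTree V) : Prop :=
  T.clause = D ∧ T.wf rstep ∧ T.regular ∧ T.lemOK Γ ∧
  ∀ x ∈ T.resVars, (x, true) ∉ D ∧ (x, false) ∉ D

/-- regular tree-like resolution derivation of the clause `D` from `Γ`. -/
def RegTreeDeriv {V : Type} [DecidableEq V] (Γ : Set (Clause V)) (D : Clause V)
    (T : PTree V) : Prop :=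
  T.clause = D ∧ T.wf rstep ∧ T.regular ∧ T.leavesIn Γ ∧
  ∀ x ∈ T.resVars, (x, true) ∉ D ∧ (x, false) ∉ D

/-! ### Dag-like derivations -/

/-- A dag-like resolution derivation: a sequence of `len` clauses, each an
axiom (`just i = none`) or obtained by resolution from two earlier clauses. -/
structure DagDeriv (V : Type) [DecidableEq V] where
  len : ℕ
  cl : ℕ → Clause V
  just : ℕ → Option (ℕ × ℕ × V)

namespace DagDeriv

variable {V : Type} [DecidableEq V]

/-- Validity relative to the initial clause set `Γ`. -/
def ok (D : DagDeriv V) (Γ : Set (Clause V)) : Prop :=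
  ∀ i, i < D.len →
    match D.just i with
    | none => D.cl i ∈ Γ
    | some (a, b, x) => a < i ∧ b < i ∧ rstep x (D.cl a) (D.cl b) (D.cl i)

/-- `j` is a premise of `i`. -/
def prem (D : DagDeriv V) (i j : ℕ) : Prop :=
  ∃ a b x, D.just i = some (a, b, x) ∧ (j = a ∨ j = b)

/-- `j` lies in the subderivation of `i` (is reachable from `i` in the dag). -/
def reach (D : DagDeriv V) : ℕ → ℕ → Prop := Relation.ReflTransGen D.prem

/-- `x` is the resolution variable of the inference at `i`. -/
def resAt (D : DagDeriv V) (i : ℕ) (x : V) : Prop := ∃ a b, D.just i = some (a, b, x)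

/-- No variable is used as resolution variable twice along a path of the dag. -/
def regular (D : DagDeriv V) : Prop :=
  ∀ i a b x, D.just i = some (a, b, x) →
    ∀ j, (D.reach a j ∨ D.reach b j) → ¬ D.resAt j x

/-- The subderivation of `i` uses `x` as a resolution variable. -/
def usesVar (D : DagDeriv V) (i : ℕ) (x : V) : Prop := ∃ j, D.reach i j ∧ D.resAt j x

end DagDeriv

/-! ### Supports, bypassing, and the sets `B`, `B⁺`, `S_ℓ^B(C)` for a clause
`C = ¬p_{i_1,j_1} ∨ … ∨ ¬p_{i_k,j_k}` given by `k` and the functions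
`I J : ℕ → ℕ` (with `I ℓ = i_ℓ`, `J ℓ = j_ℓ` for `1 ≤ ℓ ≤ k`). -/

/-- Index `ℓ` is bypassed. -/
def bypassed (k : ℕ) (J : ℕ → ℕ) (ℓ : ℕ) : Prop :=
  ∃ ℓ', ℓ < ℓ' ∧ ℓ' ≤ k ∧ J ℓ' = J ℓ

/-- `ℓ'` is the max-bypasser of `ℓ`. -/
def maxByp (k : ℕ) (J : ℕ → ℕ) (ℓ ℓ' : ℕ) : Prop :=
  ℓ < ℓ' ∧ ℓ' ≤ k ∧ J ℓ' = J ℓ ∧ ∀ a, ℓ < a → a ≤ k → J a = J ℓ → a ≤ ℓ'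

/-- `i_{ℓ'}` directly supports `i_ℓ`. -/
def dsup (G : StoneDag) (k : ℕ) (I J : ℕ → ℕ) (ℓ' ℓ : ℕ) : Prop :=
  1 ≤ ℓ ∧ ℓ < ℓ' ∧ ℓ' ≤ k ∧
  (maxByp k J ℓ ℓ' ∨
    (¬ bypassed k J ℓ ∧ (I ℓ' = G.p1 (I ℓ) ∨ I ℓ' = G.p2 (I ℓ))))

/-- `i_a` supports `i_b`: reflexive transitive closure of direct support. -/
def supp (G : StoneDag) (k : ℕ) (I J : ℕ → ℕ) : ℕ → ℕ → Prop :=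
  Relation.ReflTransGen (dsup G k I J)

/-- `dom(C)` as a set of vertices. -/
def domv (k : ℕ) (I : ℕ → ℕ) : Set ℕ := { v | ∃ a, 1 ≤ a ∧ a ≤ k ∧ I a = v }

/-- `S_ℓ(C)`: the set of vertices of `dom(C)` supporting `i_ℓ`. -/
def suppSet (G : StoneDag) (k : ℕ) (I J : ℕ → ℕ) (ℓ : ℕ) : Set ℕ :=
  { v | ∃ a, 1 ≤ a ∧ a ≤ k ∧ I a = v ∧ supp G k I J a ℓ }

/-- `i_ℓ ∈ B`: not bypassed and some predecessor outside `dom(C)`. -/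
def Bidx (G : StoneDag) (k : ℕ) (I J : ℕ → ℕ) (ℓ : ℕ) : Prop :=
  1 ≤ ℓ ∧ ℓ ≤ k ∧ ¬ bypassed k J ℓ ∧
  (G.p1 (I ℓ) ∉ domv k I ∨ G.p2 (I ℓ) ∉ domv k I)

/-- `i_ℓ ∈ B₁`: exactly one predecessor outside `dom(C)`. -/
def B1idx (G : StoneDag) (k : ℕ) (I J : ℕ → ℕ) (ℓ : ℕ) : Prop :=
  Bidx G k I J ℓ ∧ (G.p1 (I ℓ) ∈ domv k I ∨ G.p2 (I ℓ) ∈ domv k I)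

/-- `i_ℓ ∈ B₂`: both predecessors outside `dom(C)`. -/
def B2idx (G : StoneDag) (k : ℕ) (I J : ℕ → ℕ) (ℓ : ℕ) : Prop :=
  1 ≤ ℓ ∧ ℓ ≤ k ∧ ¬ bypassed k J ℓ ∧
  G.p1 (I ℓ) ∉ domv k I ∧ G.p2 (I ℓ) ∉ domv k I

/-- `i_ℓ ∈ B⁺`: in `B`, or bypassed with max-bypasser in `B`. -/
def Bplus (G : StoneDag) (k : ℕ) (I J : ℕ → ℕ) (ℓ : ℕ) : Prop :=
  Bidx G k I J ℓ ∨ (1 ≤ ℓ ∧ ℓ ≤ k ∧ ∃ ℓ', maxByp k J ℓ ℓ' ∧ Bidx G k I J ℓ')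

/-- Membership in `S_ℓ^B(C)` (on indices). -/
inductive SBmem (G : StoneDag) (k : ℕ) (I J : ℕ → ℕ) (ℓ : ℕ) : ℕ → Prop where
  | base : SBmem G k I J ℓ ℓ
  | byp (a b : ℕ) : SBmem G k I J ℓ a → (a = ℓ ∨ ¬ Bidx G k I J a) →
      maxByp k J a b → ¬ Bidx G k I J b → SBmem G k I J ℓ b
  | pred (a b : ℕ) : SBmem G k I J ℓ a → (a = ℓ ∨ ¬ Bidx G k I J a) →
      ¬ bypassed k J a → 1 ≤ b → b ≤ k →
      (I b = G.p1 (I a) ∨ I b = G.p2 (I a)) → SBmem G k I J ℓ b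

/-- The clause `C_ℓ`. -/
noncomputable def Clc (G : StoneDag) (k : ℕ) (I J : ℕ → ℕ) (ℓ : ℕ) : Clause SV :=
  ((Finset.Icc 1 k).filter fun a =>
      SBmem G k I J ℓ a ∧ ¬(a = ℓ ∧ bypassed k J ℓ)).image
    fun a => ((SV.p (I a) (J a), false) : Lit SV)

/-- The clause `E_ℓ`. -/
noncomputable def Elc (G : StoneDag) (k : ℕ) (I J : ℕ → ℕ) (ℓ : ℕ) : Clause SV :=
  ((Finset.Icc 1 k).filter fun a =>
      SBmem G k I J ℓ a ∧ Bplus G k I J a ∧ (Bidx G k I J ℓ → a ≠ ℓ)).image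
    fun a => ((SV.r (J a), false) : Lit SV)

/-- `t_1,…,t_r` enumerates the indices of `B ∪ {1}` in decreasing order. -/
def EnumB (G : StoneDag) (k : ℕ) (I J : ℕ → ℕ) (r : ℕ) (t : ℕ → ℕ) : Prop :=
  (∀ q, 1 ≤ q → q ≤ r → (Bidx G k I J (t q) ∨ t q = 1)) ∧
  (∀ q q', 1 ≤ q → q < q' → q' ≤ r → t q' < t q) ∧
  (∀ ℓ, Bidx G k I J ℓ ∨ ℓ = 1 → ∃ q, 1 ≤ q ∧ q ≤ r ∧ t q = ℓ)

/-- The clause `F_q`. -/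
noncomputable def Fcl (G : StoneDag) (k : ℕ) (I J : ℕ → ℕ) (r : ℕ) (t : ℕ → ℕ)
    (q : ℕ) : Clause SV :=
  if q = r ∧ ¬ Bidx G k I J 1 then Elc G k I J 1
  else (Finset.Icc 1 (q - 1)).image fun q' => ((SV.r (J (t q')), false) : Lit SV)

/-- The standing hypotheses on the clause `C`: `k ≥ 1`, `1 = i_1 < … < i_k ≤ n`,
`j_ℓ ∈ {1,…,m}`, and every vertex of `dom(C)` supports vertex `1`. -/
def GoodC (G : StoneDag) (m k : ℕ) (I J : ℕ → ℕ) : Prop :=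
  1 ≤ k ∧ I 1 = 1 ∧ I k ≤ G.n ∧
  (∀ a b, 1 ≤ a → a < b → b ≤ k → I a < I b) ∧
  (∀ a, 1 ≤ a → a ≤ k → 1 ≤ J a ∧ J a ≤ m) ∧
  (∀ a, 1 ≤ a → a ≤ k → supp G k I J a 1)

/-! ### Tree-like derivations without lemmas -/

namespace PTree

variable {V : Type} [DecidableEq V]

lemma subset_scan (T : PTree V) (L : Set (Clause V)) : L ⊆ (T.scan L).1 := by
  induction T generalizing L with
  | leaf c => exact subset_rfl
  | node c x t1 t2 h1 h2 => exact fun d hd => Or.inl (h2 _ (h1 _ hd))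

lemma leavesIn.lemOK {Γ L : Set (Clause V)} {T : PTree V} (h : T.leavesIn Γ) (hL : Γ ⊆ L) :
    T.lemOK L := by
  induction T generalizing L with
  | leaf c => exact hL h
  | node c x t1 t2 h1 h2 =>
    exact ⟨h1 h.1 hL, h2 h.2 (hL.trans (subset_scan t1 L))⟩

end PTree

/-- `D` has a regular tree-like resolution derivation from `Γ` of size at most `s`, all of whose
resolution variables lie in `W`. -/
def TreeDerivable {V : Type} [DecidableEq V] (Γ : Set (Clause V)) (D : Clause V) (W : Set V)
    (s : ℕ) : Prop :=
  ∃ T : PTree V, T.clause = D ∧ T.wf rstep ∧ T.regular ∧ T.leavesIn Γ ∧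
    (∀ x ∈ T.resVars, x ∈ W) ∧ T.size ≤ s

namespace TreeDerivable

variable {V : Type} [DecidableEq V] {Γ : Set (Clause V)} {A B D : Clause V} {W W' : Set V}
  {s s' : ℕ}

lemma of_mem (h : D ∈ Γ) : TreeDerivable Γ D W 1 :=
  ⟨.leaf D, rfl, trivial, trivial, h, by simp [PTree.resVars], le_rfl⟩

lemma mono (h : TreeDerivable Γ D W s) (hW : W ⊆ W') (hs : s ≤ s') :
    TreeDerivable Γ D W' s' := by
  obtain ⟨T, h1, h2, h3, h4, h5, h6⟩ := h
  exact ⟨T, h1, h2, h3, h4, fun x hx => hW (h5 x hx), h6.trans hs⟩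

lemma resolve {x : V} (hA : TreeDerivable Γ A W s) (hB : TreeDerivable Γ B W s')
    (hxA : (x, true) ∈ A) (hxB : (x, false) ∈ B) (hx : x ∉ W) :
    TreeDerivable Γ (wres x A B) (insert x W) (s + s' + 1) := by
  obtain ⟨T, rfl, h2, h3, h4, h5, h6⟩ := hA
  obtain ⟨T', rfl, h2', h3', h4', h5', h6'⟩ := hB
  refine ⟨.node (wres x T.clause T'.clause) x T T', rfl, ⟨⟨hxA, hxB, rfl⟩, h2, h2'⟩,
    ⟨fun h => hx (h5 x h), fun h => hx (h5' x h), h3, h3'⟩, ⟨h4, h4'⟩, ?_, ?_⟩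
  · intro y hy
    simp only [PTree.resVars, Finset.mem_insert, Finset.mem_union] at hy
    rcases hy with rfl | hy | hy
    · exact Or.inl rfl
    · exact Or.inr (h5 y hy)
    · exact Or.inr (h5' y hy)
  · simp only [PTree.size]
    omega

end TreeDerivable

/-- The literals `¬r_j` for `j ∈ R`. -/
def negR (R : Finset ℕ) : Clause SV := R.image fun j => (SV.r j, false)

/-- The literals `¬p_{i_a,j_a}` for `a ∈ S`. -/
def negP (I J : ℕ → ℕ) (S : Finset ℕ) : Clause SV := S.image fun a => (SV.p (I a) (J a), false)

/-- Resolving away all the literals of `p_{v,1} ∨ … ∨ p_{v,m}`. -/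
lemma TreeDerivable.resolve_stones {Γ : Set (Clause SV)} {m v s : ℕ} {W : Set SV}
    (Q : ℕ → Clause SV)
    (hv : (Finset.Icc 1 m).image (fun j => ((SV.p v j, true) : Lit SV)) ∈ Γ)
    (hW : ∀ j, SV.p v j ∉ W) (hQ : ∀ j j' b, (SV.p v j', b) ∉ Q j)
    (h : ∀ j, 1 ≤ j → j ≤ m → TreeDerivable Γ (insert (SV.p v j, false) (Q j)) W s) :
    TreeDerivable Γ ((Finset.Icc 1 m).biUnion Q) (W ∪ Set.range (SV.p v)) (m * (s + 1) + 1) := by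
  have key : ∀ t ≤ m, TreeDerivable Γ
      ((Finset.Icc (t + 1) m).image (fun j => ((SV.p v j, true) : Lit SV)) ∪
        (Finset.Icc 1 t).biUnion Q)
      (W ∪ {x | ∃ j ≤ t, x = SV.p v j}) (t * (s + 1) + 1) := by
    intro t
    induction t with
    | zero =>
      intro _
      simpa using (TreeDerivable.of_mem hv).mono (W := ∅) (Set.empty_subset _) le_rfl
    | succ t ih =>
      intro ht
      have hres := (ih (by omega)).resolve (x := SV.p v (t + 1))
        ((h (t + 1) (by omega) ht).mono Set.subset_union_left le_rfl)
        (by simp; omega) (by simp) (by simp [hW])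
      have hc : wres (SV.p v (t + 1))
          ((Finset.Icc (t + 1) m).image (fun j => ((SV.p v j, true) : Lit SV)) ∪
            (Finset.Icc 1 t).biUnion Q) (insert (SV.p v (t + 1), false) (Q (t + 1))) =
          (Finset.Icc (t + 1 + 1) m).image (fun j => ((SV.p v j, true) : Lit SV)) ∪
            (Finset.Icc 1 (t + 1)).biUnion Q := by
        ext ⟨x, b⟩
        have hx : ∀ j j' b, (x, b) ∈ Q j → x ≠ SV.p v j' := by
          rintro j j' b hb rfl
          exact hQ _ _ _ hb
        simp only [wres, Finset.mem_union, Finset.mem_erase, Finset.mem_image, Finset.mem_biUnion,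
          Finset.mem_Icc, Finset.mem_insert, Prod.mk.injEq, ne_eq]
        constructor
        · rintro (⟨h1, ⟨j, hj, rfl, rfl⟩ | ⟨j, hj, hb⟩⟩ | ⟨h1, h2 | h2⟩)
          · refine Or.inl ⟨j, ⟨?_, hj.2⟩, rfl, rfl⟩
            rcases Nat.lt_or_ge (t + 1) j with hlt | hge
            · exact hlt
            · exact absurd ⟨by rw [show j = t + 1 by omega], rfl⟩ h1
          · exact Or.inr ⟨j, ⟨hj.1, by omega⟩, hb⟩
          · exact absurd h2 h1
          · exact Or.inr ⟨t + 1, by omega, h2⟩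
        · rintro (⟨j, hj, rfl, rfl⟩ | ⟨j, hj, hb⟩)
          · refine Or.inl ⟨?_, Or.inl ⟨j, by omega, rfl, rfl⟩⟩
            rintro ⟨h1, -⟩
            simp only [SV.p.injEq, true_and] at h1
            omega
          · rcases Nat.lt_or_ge t j with hlt | hge
            · obtain rfl : j = t + 1 := by omega
              exact Or.inr ⟨fun h1 => hx _ _ _ hb h1.1, Or.inr hb⟩
            · exact Or.inl ⟨fun h1 => hx _ _ _ hb h1.1, Or.inr ⟨j, by omega, hb⟩⟩
      rw [hc] at hres
      refine hres.mono ?_ (by ring_nf; omega)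
      rintro y (rfl | hy | ⟨j, hj, rfl⟩)
      · exact Or.inr ⟨t + 1, le_rfl, rfl⟩
      · exact Or.inl hy
      · exact Or.inr ⟨j, by omega, rfl⟩
  have hm := key m le_rfl
  simp only [Finset.Icc_eq_empty (show ¬ m + 1 ≤ m by omega), Finset.image_empty,
    Finset.empty_union] at hm
  refine hm.mono (Set.union_subset_union_right _ ?_) le_rfl
  rintro y ⟨j, -, rfl⟩
  exact ⟨j, rfl⟩

/-- Eliminating a vertex `v` all of whose stones are known to be red. The stones in `R` are kept
as literals `¬r_x`, and the variables `r_x` with `x ∈ R` are not resolved on. -/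
lemma TreeDerivable.eliminate_red_vertex {Γ : Set (Clause SV)} {m v j s : ℕ} {K : Clause SV}
    {R : Finset ℕ} {W : Set SV} (R' : ℕ → Finset ℕ) (W' : ℕ → Set SV)
    (hm : 2 ≤ m) (hj : 1 ≤ j) (hjm : j ≤ m)
    (hv : (Finset.Icc 1 m).image (fun j => ((SV.p v j, true) : Lit SV)) ∈ Γ)
    (hred : ∀ x, 1 ≤ x → x ≤ m → ({(SV.p v x, false), (SV.r x, true)} : Clause SV) ∈ Γ)
    (hKp : ∀ x b, (SV.p v x, b) ∉ K) (hKr : ∀ x, (SV.r x, false) ∉ K)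
    (hKj : (SV.r j, true) ∈ K)
    (hR : ∀ x ∈ R, 1 ≤ x ∧ x ≤ m ∧ x ≠ j) (hR' : ∀ x, R' x ⊆ R)
    (hW' : ∀ x, W' x ⊆ W) (hWp : ∀ x, SV.p v x ∉ W) (hWr : ∀ x, x ∉ R → SV.r x ∉ W' x)
    (hs : 1 ≤ s)
    (h : ∀ x, 1 ≤ x → x ≤ m → x ≠ j → TreeDerivable Γ
      (insert (SV.p v x, false) (K ∪ negR (insert x (R' x)))) (W' x) s) :
    TreeDerivable Γ (K ∪ negR R)
      ((W ∪ {y | ∃ x, x ∉ R ∧ x ≠ j ∧ y = SV.r x}) ∪ Set.range (SV.p v)) (m * (s + 3) + 1) := by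
  set Q : ℕ → Clause SV := fun x =>
    if x = j then {(SV.r j, true)} else K ∪ negR (R' x ∪ (R ∩ {x})) with hQdef
  have hQ : ∀ x, 1 ≤ x → x ≤ m → TreeDerivable Γ (insert (SV.p v x, false) (Q x))
      (W ∪ {y | ∃ x, x ∉ R ∧ x ≠ j ∧ y = SV.r x}) (s + 2) := by
    intro x hx hxm
    by_cases hxj : x = j
    · subst hxj
      simp only [hQdef, if_true]
      exact (TreeDerivable.of_mem (hred x hx hxm)).mono (W := ∅) (Set.empty_subset _) (by omega)
    · by_cases hxR : x ∈ R
      · have hc : Q x = K ∪ negR (insert x (R' x)) := by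
          simp only [hQdef, if_neg hxj]
          congr 2
          ext y
          simp only [Finset.mem_union, Finset.mem_inter, Finset.mem_singleton, Finset.mem_insert]
          grind
        rw [hc]
        exact (h x hx hxm hxj).mono ((hW' x).trans Set.subset_union_left) (by omega)
      · have hres := (TreeDerivable.of_mem (hred x hx hxm)).resolve (h x hx hxm hxj)
          (by simp) (by simp [negR]) (hWr x hxR)
        have hc : wres (SV.r x) {(SV.p v x, false), (SV.r x, true)}
            (insert (SV.p v x, false) (K ∪ negR (insert x (R' x)))) =
            insert (SV.p v x, false) (Q x) := by
          have h1 : x ∉ R' x := fun hx' => hxR (hR' x hx')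
          have h2 := hKr x
          simp only [hQdef, if_neg hxj]
          ext ⟨y, b⟩
          simp only [wres, negR, Finset.mem_union, Finset.mem_erase, Finset.mem_insert,
            Finset.mem_singleton, Finset.mem_image, Finset.mem_inter, Prod.mk.injEq, ne_eq]
          grind
        rw [hc] at hres
        refine hres.mono ?_ (by omega)
        rintro y (rfl | hy)
        · exact Or.inr ⟨x, hxR, hxj, rfl⟩
        · exact Or.inl (hW' x hy)
  have hfin := TreeDerivable.resolve_stones Q hv (by simpa using hWp) (by
    intro x y b
    simp only [hQdef]
    split_ifs
    · simp
    · simp [negR, hKp]) hQ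
  have hc : (Finset.Icc 1 m).biUnion Q = K ∪ negR R := by
    ext y
    simp only [Finset.mem_biUnion, Finset.mem_Icc, Finset.mem_union]
    constructor
    · rintro ⟨x, hx, hy⟩
      simp only [hQdef] at hy
      split_ifs at hy
      · rw [Finset.mem_singleton] at hy
        exact Or.inl (hy ▸ hKj)
      · rcases Finset.mem_union.1 hy with hy | hy
        · exact Or.inl hy
        · exact Or.inr (Finset.image_subset_image
            (Finset.union_subset (hR' x) Finset.inter_subset_left) hy)
    · rintro (hy | hy)
      · obtain ⟨x, hx1, hx2, hx3⟩ : ∃ x, 1 ≤ x ∧ x ≤ m ∧ x ≠ j := by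
          by_cases h1 : j = 1
          · exact ⟨2, by omega, hm, by omega⟩
          · exact ⟨1, by omega, by omega, by omega⟩
        refine ⟨x, ⟨hx1, hx2⟩, ?_⟩
        simp [hQdef, hx3, hy]
      · simp only [negR, Finset.mem_image] at hy
        obtain ⟨x, hx, rfl⟩ := hy
        obtain ⟨hx1, hx2, hx3⟩ := hR x hx
        refine ⟨x, ⟨hx1, hx2⟩, ?_⟩
        simp [hQdef, hx3, negR, hx]
  rw [hc] at hfin
  exact hfin.mono subset_rfl (by rw [Nat.add_assoc])

/-! ### Propagating redness to a single vertex -/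

section Propagation

variable {Γ : Set (Clause SV)} {m u w i j : ℕ} {R : Finset ℕ}

/-- Propagating redness to `i` along an edge from a vertex `w` all of whose stones are red, the
other predecessor `u` carrying the stone `x`. -/
lemma TreeDerivable.propagate_one {x : ℕ} (hm : 2 ≤ m) (hj : 1 ≤ j) (hjm : j ≤ m)
    (hR : ∀ x ∈ R, 1 ≤ x ∧ x ≤ m ∧ x ≠ j) (hx : 1 ≤ x) (hxm : x ≤ m) (hxj : x ≠ j)
    (huw : u ≠ w) (hiw : i ≠ w)
    (hv : (Finset.Icc 1 m).image (fun j => ((SV.p w j, true) : Lit SV)) ∈ Γ)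
    (hred : ∀ x, 1 ≤ x → x ≤ m → ({(SV.p w x, false), (SV.r x, true)} : Clause SV) ∈ Γ)
    (hind : ∀ y, 1 ≤ y → y ≤ m → y ≠ j →
      ({(SV.p u x, false), (SV.r x, false), (SV.p w y, false), (SV.r y, false),
        (SV.p i j, false), (SV.r j, true)} : Clause SV) ∈ Γ) :
    TreeDerivable Γ
      ({(SV.p u x, false), (SV.p i j, false), (SV.r j, true)} ∪ negR (insert x R))
      ({y | ∃ z, z ∉ insert x R ∧ z ≠ j ∧ y = SV.r z} ∪ Set.range (SV.p w)) (4 * m + 1) := by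
  have h := TreeDerivable.eliminate_red_vertex (Γ := Γ) (m := m) (v := w) (j := j) (s := 1)
    (K := {(SV.p u x, false), (SV.p i j, false), (SV.r j, true)}) (R := insert x R) (W := ∅)
    (fun _ => {x}) (fun _ => ∅) hm hj hjm hv hred (by simp [huw.symm, hiw.symm]) (by simp)
    (by simp) (by
      intro z hz
      rcases Finset.mem_insert.1 hz with rfl | hz
      · exact ⟨hx, hxm, hxj⟩
      · exact hR z hz) (by simp) (by simp) (by simp) (by simp) le_rfl (by
      intro y hy hym hyj
      have hc : insert (SV.p w y, false)
          (({(SV.p u x, false), (SV.p i j, false), (SV.r j, true)} : Clause SV) ∪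
            negR (insert y {x})) = {(SV.p u x, false), (SV.r x, false), (SV.p w y, false),
              (SV.r y, false), (SV.p i j, false), (SV.r j, true)} := by
        ext l
        simp only [negR, Finset.mem_union, Finset.mem_insert, Finset.mem_singleton,
          Finset.image_insert, Finset.image_singleton]
        tauto
      rw [hc]
      exact TreeDerivable.of_mem (hind y hy hym hyj))
  rw [Set.empty_union] at h
  exact h.mono subset_rfl (by omega)

/-- Propagating redness to `i` when all stones on either predecessor are red. -/
lemma TreeDerivable.propagate_two (hm : 2 ≤ m) (hj : 1 ≤ j) (hjm : j ≤ m)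
    (hR : ∀ x ∈ R, 1 ≤ x ∧ x ≤ m ∧ x ≠ j) (huw : u ≠ w) (hiu : i ≠ u) (hiw : i ≠ w)
    (hvu : (Finset.Icc 1 m).image (fun j => ((SV.p u j, true) : Lit SV)) ∈ Γ)
    (hvw : (Finset.Icc 1 m).image (fun j => ((SV.p w j, true) : Lit SV)) ∈ Γ)
    (hredu : ∀ x, 1 ≤ x → x ≤ m → ({(SV.p u x, false), (SV.r x, true)} : Clause SV) ∈ Γ)
    (hredw : ∀ x, 1 ≤ x → x ≤ m → ({(SV.p w x, false), (SV.r x, true)} : Clause SV) ∈ Γ)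
    (hind : ∀ x y, 1 ≤ x → x ≤ m → x ≠ j → 1 ≤ y → y ≤ m → y ≠ j →
      ({(SV.p u x, false), (SV.r x, false), (SV.p w y, false), (SV.r y, false),
        (SV.p i j, false), (SV.r j, true)} : Clause SV) ∈ Γ) :
    TreeDerivable Γ ({(SV.p i j, false), (SV.r j, true)} ∪ negR R)
      ({y | ∃ z, z ∉ R ∧ z ≠ j ∧ y = SV.r z} ∪ Set.range (SV.p w) ∪ Set.range (SV.p u))
      (9 * m ^ 2) := by
  have h := TreeDerivable.eliminate_red_vertex (Γ := Γ) (m := m) (v := u) (j := j)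
    (s := 4 * m + 1) (K := {(SV.p i j, false), (SV.r j, true)}) (R := R)
    (W := {y | ∃ z, z ∉ R ∧ z ≠ j ∧ y = SV.r z} ∪ Set.range (SV.p w)) (fun _ => R)
    (fun x => {y | ∃ z, z ∉ insert x R ∧ z ≠ j ∧ y = SV.r z} ∪ Set.range (SV.p w))
    hm hj hjm hvu hredu (by simp [hiu.symm]) (by simp) (by simp) hR (by simp) (by
      rintro x y (⟨z, hz, hzj, rfl⟩ | hy)
      · exact Or.inl ⟨z, fun hzR => hz (Finset.mem_insert_of_mem hzR), hzj, rfl⟩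
      · exact Or.inr hy) (by simp [huw.symm]) (by simp) (by omega) (by
      intro x hx hxm hxj
      have hp := TreeDerivable.propagate_one (Γ := Γ) (u := u) (w := w) (i := i) hm hj hjm hR
        hx hxm hxj huw hiw hvw hredw (fun y => hind x y hx hxm hxj)
      rwa [Finset.insert_union] at hp)
  refine h.mono ?_ (by nlinarith)
  rintro y ((hy | hy) | hy)
  · exact Or.inl hy
  · exact Or.inl (Or.inl hy)
  · exact Or.inr hy

end Propagation

/-! ### The derivation along the clause -/

section Closure

variable {G : StoneDag} {m k : ℕ} {I J : ℕ → ℕ} {L : Set ℕ}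

/-- The Stone clauses together with the clauses `¬p_{i,j} ∨ r_j` for `i ∈ L`. -/
def stoneWithLearned (G : StoneDag) (m : ℕ) (L : Set ℕ) : Set (Clause SV) :=
  stoneClauses G m ∪
    { C | ∃ i j, i ∈ L ∧ 1 ≤ j ∧ j ≤ m ∧ C = {(SV.p i j, false), (SV.r j, true)} }

/-- The stones carried by the vertices `i_a,…,i_k`. -/
def stonesFrom (k : ℕ) (J : ℕ → ℕ) (a : ℕ) : Finset ℕ := (Finset.Icc a k).image J

lemma mem_stonesFrom {a x : ℕ} : x ∈ stonesFrom k J a ↔ ∃ b, (a ≤ b ∧ b ≤ k) ∧ J b = x := by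
  simp [stonesFrom]

lemma not_mem_stonesFrom_succ {a : ℕ} (ha : ¬ bypassed k J a) :
    J a ∉ stonesFrom k J (a + 1) := by
  rw [mem_stonesFrom]
  rintro ⟨b, hb, h⟩
  exact ha ⟨b, by omega, hb.2, h⟩

/-- The variables available for resolution when the stones in `R` are reserved. -/
def freeVars (L : Set ℕ) (R : Finset ℕ) : Set SV :=
  {y | (∃ z, z ∉ R ∧ y = SV.r z) ∨ ∃ v j, v ∈ L ∧ y = SV.p v j}

lemma insert_pair_swap {α : Type} [DecidableEq α] (a b c d : α) (s : Finset α) :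
    insert a (insert b (insert c (insert d s))) = insert c (insert d (insert a (insert b s))) := by
  ext l
  simp only [Finset.mem_insert]
  tauto

lemma induction_clause_eq (a b c : ℕ) :
    ({(SV.p (I b) (J b), false), (SV.r (J b), false), (SV.p (I c) (J c), false),
      (SV.r (J c), false), (SV.p (I a) (J a), false), (SV.r (J a), true)} : Clause SV) =
      insert (SV.r (J a), true) (negP I J {a, b, c} ∪ negR {J b, J c}) := by
  ext l
  simp only [negP, negR, Finset.mem_union, Finset.mem_insert, Finset.mem_singleton,
    Finset.image_insert, Finset.image_singleton]
  tauto

/-- Redness of the stone on a non-bypassed vertex, relative to redness of later stones. -/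
lemma red_of_not_bypassed (hm : 2 ≤ m) (hC : GoodC G m k I J)
    (hL : ∀ v ∈ L, v ∉ domv k I) {a : ℕ} (ha : 1 ≤ a) (hak : a ≤ k)
    (hb : ¬ bypassed k J a) (h1 : G.p1 (I a) ∈ domv k I ∪ L) (h2 : G.p2 (I a) ∈ domv k I ∪ L) :
    ∃ S U : Finset ℕ, S ⊆ Finset.Icc 1 k ∧ a ∈ S ∧ (∀ b ∈ S, a ≤ b) ∧
      (∀ b ∈ S, b ≠ a → J b ∈ U) ∧ U ⊆ stonesFrom k J (a + 1) ∧
      (∀ b, 1 ≤ b → b ≤ k → I b = G.p1 (I a) ∨ I b = G.p2 (I a) → b ∈ S) ∧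
      TreeDerivable (stoneWithLearned G m L)
        (insert (SV.r (J a), true) (negP I J S ∪ negR U)) (freeVars L (stonesFrom k J a))
        (9 * m ^ 2) := by
  obtain ⟨-, hI1, hIk, hImono, hJ, -⟩ := hC
  have hinj : ∀ b c, 1 ≤ b → b ≤ k → 1 ≤ c → c ≤ k → I b = I c → b = c := by
    intro b c hb hbk hc hck h
    rcases lt_trichotomy b c with hlt | rfl | hlt
    · have := hImono b c hb hlt hck
      omega
    · rfl
    · have := hImono c b hc hlt hbk
      omega
  have hlt : ∀ b, 1 ≤ b → b ≤ k → I a < I b → a < b := by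
    intro b hb hbk h
    by_contra hle
    rcases Nat.lt_or_ge b a with hba | hba
    · have := hImono b a hb hba hak
      omega
    · obtain rfl : a = b := by omega
      omega
  have hIa1 : 1 ≤ I a := by
    rcases Nat.lt_or_ge 1 a with h | h
    · have := hImono 1 a le_rfl h hak
      omega
    · obtain rfl : a = 1 := by omega
      omega
  have hIan : I a ≤ G.n := by
    rcases Nat.lt_or_ge a k with h | h
    · have := hImono a k ha h le_rfl
      omega
    · obtain rfl : a = k := by omega
      exact hIk
  have hg1 := G.p1_gt _ hIa1 hIan
  have hg2 := G.p2_gt _ hIa1 hIan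
  have hl1 := G.p1_le _ hIa1 hIan
  have hl2 := G.p2_le _ hIa1 hIan
  have hne := G.p_ne _ hIa1 hIan
  obtain ⟨hja, hjm⟩ := hJ a ha hak
  set R := stonesFrom k J (a + 1) with hRdef
  have hR : ∀ x ∈ R, 1 ≤ x ∧ x ≤ m ∧ x ≠ J a := by
    intro x hx
    refine ⟨?_, ?_, fun h => not_mem_stonesFrom_succ hb (h ▸ hx)⟩
    all_goals
      obtain ⟨b, hb, rfl⟩ := mem_stonesFrom.1 hx
      have := hJ b (by omega) hb.2
      omega
  have hmemR : ∀ b, 1 ≤ b → b ≤ k → I a < I b → J b ∈ R := fun b hb hbk h =>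
    mem_stonesFrom.2 ⟨b, ⟨hlt b hb hbk h, hbk⟩, rfl⟩
  have hfree : ∀ z, z ∉ R → z ≠ J a → z ∉ stonesFrom k J a := by
    intro z hz hza h
    obtain ⟨b, hb, rfl⟩ := mem_stonesFrom.1 h
    have : b ≠ a := fun h => hza (by rw [h])
    exact hz (mem_stonesFrom.2 ⟨b, by omega, rfl⟩)
  have hstones : ∀ v, 1 ≤ v → v ≤ G.N →
      (Finset.Icc 1 m).image (fun j => ((SV.p v j, true) : Lit SV)) ∈ stoneWithLearned G m L :=
    fun v hv hvN => Or.inl (Or.inl (Or.inl (Or.inl ⟨v, hv, hvN, rfl⟩)))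
  have hred : ∀ v ∈ L, ∀ x, 1 ≤ x → x ≤ m →
      ({(SV.p v x, false), (SV.r x, true)} : Clause SV) ∈ stoneWithLearned G m L :=
    fun v hv x hx hxm => Or.inr ⟨v, x, hv, hx, hxm, rfl⟩
  have hind : ∀ x y, 1 ≤ x → x ≤ m → x ≠ J a → 1 ≤ y → y ≤ m → y ≠ J a →
      ({(SV.p (G.p1 (I a)) x, false), (SV.r x, false), (SV.p (G.p2 (I a)) y, false),
        (SV.r y, false), (SV.p (I a) (J a), false), (SV.r (J a), true)} : Clause SV) ∈
        stoneWithLearned G m L :=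
    fun x y hx hxm hxj hy hym hyj => Or.inl (Or.inr
      ⟨I a, J a, x, y, hIa1, hIan, hja, hjm, hx, hxm, hy, hym, hxj.symm, hyj.symm, rfl⟩)
  have hsize : 4 * m + 1 ≤ 9 * m ^ 2 := by nlinarith
  -- one predecessor `u = i_b` in the domain and the other one, `w`, in `L`
  have hmixed : ∀ u w b, 1 ≤ b → b ≤ k → I b = u → I a < u → w ∈ L → 1 ≤ w → w ≤ G.N →
      u ≠ w → I a ≠ w →
      (∀ x y, 1 ≤ x → x ≤ m → x ≠ J a → 1 ≤ y → y ≤ m → y ≠ J a →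
        ({(SV.p u x, false), (SV.r x, false), (SV.p w y, false),
          (SV.r y, false), (SV.p (I a) (J a), false), (SV.r (J a), true)} : Clause SV) ∈
        stoneWithLearned G m L) →
      TreeDerivable (stoneWithLearned G m L)
        (insert (SV.r (J a), true) (negP I J {a, b} ∪ negR R)) (freeVars L (stonesFrom k J a))
        (9 * m ^ 2) := by
    rintro u w b hb1 hbk rfl hu hw hw1 hwN huw hiw hcl
    have hbR := hmemR b hb1 hbk hu
    obtain ⟨h1, h2, h3⟩ := hR _ hbR
    have h := TreeDerivable.propagate_one hm hja hjm hR h1 h2 h3 huw hiw (hstones w hw1 hwN)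
      (hred w hw) (fun y => hcl (J b) y h1 h2 h3)
    rw [Finset.insert_eq_of_mem hbR] at h
    have hc : ({(SV.p (I b) (J b), false), (SV.p (I a) (J a), false), (SV.r (J a), true)} :
        Clause SV) ∪ negR R = insert (SV.r (J a), true) (negP I J {a, b} ∪ negR R) := by
      ext l
      simp only [negP, Finset.mem_union, Finset.mem_insert, Finset.mem_singleton,
        Finset.image_insert, Finset.image_singleton]
      tauto
    rw [hc] at h
    refine h.mono ?_ hsize
    rintro y (⟨z, hz, hzj, rfl⟩ | ⟨z, rfl⟩)
    · exact Or.inl ⟨z, hfree z hz hzj, rfl⟩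
    · exact Or.inr ⟨w, z, hw, rfl⟩
  rcases h1 with ⟨b, hb1, hbk, hbI⟩ | h1 <;> rcases h2 with ⟨c, hc1, hck, hcI⟩ | h2
  · have hbR := hmemR b hb1 hbk (hbI ▸ hg1)
    have hcR := hmemR c hc1 hck (hcI ▸ hg2)
    have hab := hlt b hb1 hbk (hbI ▸ hg1)
    have hac := hlt c hc1 hck (hcI ▸ hg2)
    obtain ⟨hb2, hb3, hb4⟩ := hR _ hbR
    obtain ⟨hc2, hc3, hc4⟩ := hR _ hcR
    refine ⟨{a, b, c}, {J b, J c}, ?_, by simp, by simp; omega, by simp, ?_, ?_, ?_⟩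
    · intro y
      simp only [Finset.mem_insert, Finset.mem_singleton, Finset.mem_Icc]
      omega
    · intro y
      simp only [Finset.mem_insert, Finset.mem_singleton]
      rintro (rfl | rfl) <;> assumption
    · rintro y hy hyk (h | h)
      · simp [hinj y b hy hyk hb1 hbk (h.trans hbI.symm)]
      · simp [hinj y c hy hyk hc1 hck (h.trans hcI.symm)]
    · have h := TreeDerivable.of_mem (W := freeVars L (stonesFrom k J a))
        (hind (J b) (J c) hb2 hb3 hb4 hc2 hc3 hc4)
      rw [← hbI, ← hcI] at h
      rw [induction_clause_eq] at h
      exact h.mono subset_rfl (by omega)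
  · have hab := hlt b hb1 hbk (hbI ▸ hg1)
    refine ⟨{a, b}, R, ?_, by simp, by simp; omega, ?_, subset_rfl, ?_,
      hmixed _ _ b hb1 hbk hbI hg1 h2 (by omega) hl2 hne (by omega) hind⟩
    · intro y
      simp only [Finset.mem_insert, Finset.mem_singleton, Finset.mem_Icc]
      omega
    · have := hmemR b hb1 hbk (hbI ▸ hg1)
      simp only [Finset.mem_insert, Finset.mem_singleton]
      grind
    · rintro y hy hyk (h | h)
      · simp [hinj y b hy hyk hb1 hbk (h.trans hbI.symm)]
      · exact absurd ⟨y, hy, hyk, h⟩ (hL _ h2)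
  · have hac := hlt c hc1 hck (hcI ▸ hg2)
    refine ⟨{a, c}, R, ?_, by simp, by simp; omega, ?_, subset_rfl, ?_,
      hmixed _ _ c hc1 hck hcI hg2 h1 (by omega) hl1 hne.symm (by omega) ?_⟩
    · intro y
      simp only [Finset.mem_insert, Finset.mem_singleton, Finset.mem_Icc]
      omega
    · have := hmemR c hc1 hck (hcI ▸ hg2)
      simp only [Finset.mem_insert, Finset.mem_singleton]
      grind
    · rintro y hy hyk (h | h)
      · exact absurd ⟨y, hy, hyk, h⟩ (hL _ h1)
      · simp [hinj y c hy hyk hc1 hck (h.trans hcI.symm)]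
    · intro x y hx hxm hxj hy hym hyj
      rw [insert_pair_swap]
      exact hind y x hy hym hyj hx hxm hxj
  · refine ⟨{a}, R, by simp [ha, hak], by simp, by simp, by simp, subset_rfl, ?_, ?_⟩
    · rintro y hy hyk (h | h)
      · exact absurd ⟨y, hy, hyk, h⟩ (hL _ h1)
      · exact absurd ⟨y, hy, hyk, h⟩ (hL _ h2)
    · have h := TreeDerivable.propagate_two hm hja hjm hR hne (by omega) (by omega)
        (hstones _ (by omega) hl1) (hstones _ (by omega) hl2) (hred _ h1) (hred _ h2) hind
      have hc : ({(SV.p (I a) (J a), false), (SV.r (J a), true)} : Clause SV) ∪ negR R =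
          insert (SV.r (J a), true) (negP I J {a} ∪ negR R) := by
        ext l
        simp only [negP, Finset.mem_union, Finset.mem_insert, Finset.mem_singleton,
          Finset.image_singleton]
        tauto
      rw [hc] at h
      refine h.mono ?_ le_rfl
      rintro y ((⟨z, hz, hzj, rfl⟩ | ⟨z, rfl⟩) | ⟨z, rfl⟩)
      · exact Or.inl ⟨z, hfree z hz hzj, rfl⟩
      · exact Or.inr ⟨_, z, h2, rfl⟩
      · exact Or.inr ⟨_, z, h1, rfl⟩

/-- The clause reached after resolving away the stones of all non-bypassed `i_b` with `b < a`:
it is closed under direct support as far as this is decided below `a`. -/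
lemma exists_partial_derivation (hm : 2 ≤ m) (hC : GoodC G m k I J)
    (hL : ∀ v ∈ L, v ∉ domv k I)
    (hpred : ∀ ℓ, 1 ≤ ℓ → ℓ ≤ k → ¬ bypassed k J ℓ →
      G.p1 (I ℓ) ∈ domv k I ∪ L ∧ G.p2 (I ℓ) ∈ domv k I ∪ L) (a : ℕ) (hak : a ≤ k) :
    ∃ S U : Finset ℕ, S ⊆ Finset.Icc 1 k ∧ U ⊆ stonesFrom k J (a + 1) ∧ 1 ∈ S ∧
      (∀ b ∈ S, J b ∈ stonesFrom k J (a + 1) → J b ∈ U) ∧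
      (∀ b c, c ∈ S → b ≤ a → maxByp k J c b → b ∈ S) ∧
      (∀ b c, c ∈ S → c ≤ a → ¬ bypassed k J c → 1 ≤ b → b ≤ k →
        I b = G.p1 (I c) ∨ I b = G.p2 (I c) → b ∈ S) ∧
      TreeDerivable (stoneWithLearned G m L) (negP I J S ∪ negR U)
        (freeVars L (stonesFrom k J (a + 1))) (a * (9 * m ^ 2 + 1) + 1) := by
  induction a with
  | zero =>
    obtain ⟨hk, hI1, -, -, hJ, -⟩ := hC
    refine ⟨{1}, {J 1}, by simp [hk], ?_, by simp, by simp, ?_, ?_, ?_⟩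
    · simp only [Finset.singleton_subset_iff]
      exact mem_stonesFrom.2 ⟨1, ⟨le_rfl, hk⟩, rfl⟩
    · intro b c hc hb h
      have := h.1
      omega
    · intro b c hc hc0
      rw [Finset.mem_singleton] at hc
      omega
    · obtain ⟨h1, h2⟩ := hJ 1 le_rfl hk
      refine (TreeDerivable.of_mem ?_).mono subset_rfl (by omega)
      refine Or.inl (Or.inl (Or.inr ⟨J 1, h1, h2, ?_⟩))
      simp [negP, negR, hI1]
  | succ a ih =>
    obtain ⟨S, U, hS, hU, h1S, hSU, hbyp, hprd, hder⟩ := ih (by omega)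
    have hsub : ∀ x, x ∈ stonesFrom k J (a + 1 + 1) → x ∈ stonesFrom k J (a + 1) := by
      intro x hx
      obtain ⟨b, hb, rfl⟩ := mem_stonesFrom.1 hx
      exact mem_stonesFrom.2 ⟨b, by omega, rfl⟩
    have hfree : freeVars L (stonesFrom k J (a + 1)) ⊆ freeVars L (stonesFrom k J (a + 1 + 1)) := by
      rintro y (⟨z, hz, rfl⟩ | hy)
      · exact Or.inl ⟨z, fun h => hz (hsub z h), rfl⟩
      · exact Or.inr hy
    have hmem : J (a + 1) ∈ stonesFrom k J (a + 1) := mem_stonesFrom.2 ⟨a + 1, ⟨le_rfl, hak⟩, rfl⟩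
    have hsucc : ∀ x, x ∈ stonesFrom k J (a + 1) → x ≠ J (a + 1) →
        x ∈ stonesFrom k J (a + 1 + 1) := by
      intro x hx hne
      obtain ⟨b, hb, rfl⟩ := mem_stonesFrom.1 hx
      have : b ≠ a + 1 := fun h => hne (by rw [h])
      exact mem_stonesFrom.2 ⟨b, by omega, rfl⟩
    have hmax : ∀ c, maxByp k J c (a + 1) → ¬ bypassed k J (a + 1) := by
      rintro c ⟨h1, h2, h3, h4⟩ ⟨d, hd1, hd2, hd3⟩
      have := h4 d (by omega) hd2 (hd3.trans h3)
      omega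
    by_cases hres : ¬ bypassed k J (a + 1) ∧ J (a + 1) ∈ U
    · obtain ⟨hb, hJU⟩ := hres
      obtain ⟨hp1, hp2⟩ := hpred (a + 1) (by omega) hak hb
      obtain ⟨S', U', hS', haS', hge, hSU', hU', hprd', hder'⟩ :=
        red_of_not_bypassed hm hC hL (by omega) hak hb hp1 hp2
      have hnot := not_mem_stonesFrom_succ hb
      have hold : ∀ c ∈ S ∪ S', c < a + 1 → c ∈ S := by
        intro c hc hlt
        rcases Finset.mem_union.1 hc with hc | hc
        · exact hc
        · have := hge c hc
          omega
      refine ⟨S ∪ S', U' ∪ U.erase (J (a + 1)), Finset.union_subset hS hS', ?_,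
        Finset.mem_union_left _ h1S, ?_, ?_, ?_, ?_⟩
      · refine Finset.union_subset hU' fun x hx => ?_
        rw [Finset.mem_erase] at hx
        exact hsucc x (hU hx.2) hx.1
      · intro b hbS hbJ
        have hne : J b ≠ J (a + 1) := fun h => hnot (h ▸ hbJ)
        rcases Finset.mem_union.1 hbS with hbS | hbS
        · exact Finset.mem_union_right _ (Finset.mem_erase.2 ⟨hne, hSU b hbS (hsub _ hbJ)⟩)
        · exact Finset.mem_union_left _ (hSU' b hbS fun h => hne (by rw [h]))
      · intro b c hc hba hbc
        have hcS := hold c hc (by have := hbc.1; omega)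
        rcases Nat.lt_or_ge a b with h | h
        · obtain rfl : b = a + 1 := by omega
          exact Finset.mem_union_right _ haS'
        · exact Finset.mem_union_left _ (hbyp b c hcS h hbc)
      · intro b c hc hca hcb hb1 hbk hbI
        rcases Nat.lt_or_ge a c with h | h
        · obtain rfl : c = a + 1 := by omega
          exact Finset.mem_union_right _ (hprd' b hb1 hbk hbI)
        · exact Finset.mem_union_left _
            (hprd b c (hold c hc (by omega)) h hcb hb1 hbk hbI)
      · have h := hder'.resolve hder (x := SV.r (J (a + 1))) (by simp) (by simp [negR, hJU])
          (by simp [freeVars, hmem])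
        have hc : wres (SV.r (J (a + 1)))
            (insert (SV.r (J (a + 1)), true) (negP I J S' ∪ negR U')) (negP I J S ∪ negR U) =
            negP I J (S ∪ S') ∪ negR (U' ∪ U.erase (J (a + 1))) := by
          ext ⟨y, b⟩
          simp only [wres, negP, negR, Finset.mem_union, Finset.mem_erase, Finset.mem_insert,
            Finset.mem_image, Prod.mk.injEq, ne_eq]
          grind
        rw [hc] at h
        refine h.mono ?_ (by ring_nf; omega)
        rintro y (rfl | hy)
        · exact Or.inl ⟨_, hnot, rfl⟩
        · exact hfree hy
    · have hnU : ¬ bypassed k J (a + 1) → J (a + 1) ∉ U := fun h h' => hres ⟨h, h'⟩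
      refine ⟨S, U, hS, ?_, h1S, fun b hbS hbJ => hSU b hbS (hsub _ hbJ), ?_, ?_,
        hder.mono hfree (by ring_nf; omega)⟩
      · intro x hx
        by_cases hxa : x = J (a + 1)
        · subst hxa
          have hb : bypassed k J (a + 1) := by
            by_contra hb
            exact hnU hb hx
          obtain ⟨d, hd1, hd2, hd3⟩ := hb
          exact mem_stonesFrom.2 ⟨d, ⟨hd1, hd2⟩, hd3⟩
        · exact hsucc x (hU hx) hxa
      · intro b c hc hba hbc
        rcases Nat.lt_or_ge a b with h | h
        · obtain rfl : b = a + 1 := by omega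
          have hJ := hbc.2.2.1
          exact absurd (hJ ▸ hSU c hc (hJ ▸ hmem)) (hnU (hmax c hbc))
        · exact hbyp b c hc h hbc
      · intro b c hc hca hcb hb1 hbk hbI
        rcases Nat.lt_or_ge a c with h | h
        · obtain rfl : c = a + 1 := by omega
          exact absurd (hSU _ hc hmem) (hnU hcb)
        · exact hprd b c hc h hcb hb1 hbk hbI

end Closure

/-- the closure lemma — a regRTI derivation of the non-extendible
clause `C` of size `O(N·m²)`, from the Stone clauses together with the learned
clauses `¬p_{i,j} ∨ r_j` for `i ∈ L`, resolving only on variables `r_j` and on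
variables `p_{i,j}` with `i ∉ P`. -/
theorem closure_lemma : ∃ c : ℕ, ∀ (G : StoneDag) (m : ℕ), G.N ≤ m →
    ∀ (k : ℕ) (I J : ℕ → ℕ), GoodC G m k I J →
    ∀ (P L : Set ℕ), domv k I ⊆ P → (∀ v ∈ L, v ∉ P) →
    (∀ ℓ, 1 ≤ ℓ → ℓ ≤ k → ¬ bypassed k J ℓ →
        G.p1 (I ℓ) ∈ domv k I ∪ L ∧ G.p2 (I ℓ) ∈ domv k I ∪ L) →
    ∃ T : PTree SV,
      RegRTIDeriv
        (stoneClauses G m ∪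
          { C | ∃ i j, i ∈ L ∧ 1 ≤ j ∧ j ≤ m ∧
              C = {(SV.p i j, false), (SV.r j, true)} })
        ((Finset.Icc 1 k).image fun a => ((SV.p (I a) (J a), false) : Lit SV)) T ∧
      T.size ≤ c * G.N * m ^ 2 ∧
      ∀ x ∈ T.resVars, (∃ j, x = SV.r j) ∨ (∃ i j, i ∉ P ∧ x = SV.p i j) := by
  refine ⟨11, fun G m hNm k I J hC P L hP hLP hpred => ?_⟩
  have hC' := hC
  obtain ⟨hk, hI1, hIk, hImono, hJ, hsupp⟩ := hC'
  have hIge : ∀ a, 1 ≤ a → a ≤ k → a ≤ I a := by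
    intro a ha
    induction a, ha using Nat.le_induction with
    | base => intro _; omega
    | succ a ha ih =>
      intro hak
      have := ih (by omega)
      have := hImono a (a + 1) ha (by omega) hak
      omega
  have hkn : k ≤ G.n := (hIge k hk le_rfl).trans hIk
  have hkN : k ≤ G.N := hkn.trans G.n_lt_N.le
  have hm : 2 ≤ m := by
    have := G.n_lt_N
    omega
  have hL : ∀ v ∈ L, v ∉ domv k I := fun v hv h => hLP v hv (hP h)
  obtain ⟨S, U, hS, hU, h1S, -, hbyp, hprd, T, hT, hwf, hreg, hleaves, hvars, hsize⟩ :=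
    exists_partial_derivation hm hC hL hpred k le_rfl
  have hU' : U = ∅ := by
    have : stonesFrom k J (k + 1) = ∅ := by simp [stonesFrom]
    rwa [this, Finset.subset_empty] at hU
  have hSall : S = Finset.Icc 1 k := by
    refine hS.antisymm fun a ha => ?_
    rw [Finset.mem_Icc] at ha
    have h : supp G k I J a 1 := hsupp a ha.1 ha.2
    induction h using Relation.ReflTransGen.head_induction_on with
    | refl => exact h1S
    | @head b c hab _ ih =>
      obtain ⟨hc1, hcb, hbk, h⟩ := hab
      have hcS := ih ⟨hc1, by omega⟩
      rcases h with h | ⟨hnb, h⟩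
      · exact hbyp b c hcS hbk h
      · exact hprd b c hcS (by omega) hnb (by omega) hbk h
  have hclause : T.clause =
      (Finset.Icc 1 k).image fun a => ((SV.p (I a) (J a), false) : Lit SV) := by
    rw [hT, hU', hSall]
    simp [negP, negR]
  have hfree : ∀ x ∈ T.resVars, (∃ j, x = SV.r j) ∨ (∃ i j, i ∉ P ∧ x = SV.p i j) := by
    intro x hx
    rcases hvars x hx with ⟨z, -, rfl⟩ | ⟨v, j, hv, rfl⟩
    · exact Or.inl ⟨z, rfl⟩
    · exact Or.inr ⟨v, j, hLP v hv, rfl⟩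
  refine ⟨T, ⟨hclause, hwf, hreg, hleaves.lemOK subset_rfl, fun x hx => ?_⟩, ?_, hfree⟩
  · rcases hfree x hx with ⟨z, rfl⟩ | ⟨v, j, hv, rfl⟩
    · simp
    · refine ⟨by simp, ?_⟩
      simp only [Finset.mem_image, Finset.mem_Icc, Prod.mk.injEq, SV.p.injEq, and_true, not_exists,
        not_and]
      intro a ha hav
      exact absurd (hP ⟨a, ha.1, ha.2, hav⟩) hv
  · calc T.size ≤ k * (9 * m ^ 2 + 1) + 1 := hsize
      _ ≤ G.N * (9 * m ^ 2 + 1) + G.N := Nat.add_le_add (Nat.mul_le_mul_right _ hkN) (by omega)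
      _ = G.N * (9 * m ^ 2 + 2) := by ring
      _ ≤ G.N * (11 * m ^ 2) := Nat.mul_le_mul_left _ (by nlinarith)
      _ = 11 * G.N * m ^ 2 := by ring
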